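/- arXiv:math-ph/0511080 — 5 statements merged into one kernel-verified Lean document; each statement's English description precedes it below -/
import Mathlib

section
/- Let Γ be a connected simple graph on a vertex set V, let G be a groupoid over a set Q, let f: V → Q, and suppose given for every adjacent pair x ~ y an arrow φ(x,y): f(x) → f(y) such that φ(y,x) = φ(x,y)⁻¹ and such that for every closed walk p based at a vertex x the composite φ(p) equals 1_{f(x)} (triviality of holonomy, i.e. flatness of the discrete field). Then there exists a unique morphism Φ from the pair groupoid on V to G with object map f such that Φ(x,y) = φ(x,y) for every adjacent pair x ~ y. (This is the paper's proposition on the unique extension of a discrete field to a groupoid morphism, with the holonomy hypothesis its proof implicitly uses made explicit.) -/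
/-- A groupoid over a set `Q`, with set of arrows `A`: composition is modeled as a
total operation whose axioms are imposed only on composable pairs
(`tgt g = src h`). -/
structure DiscGroupoid (A : Type*) (Q : Type*) where
  src : A → Q
  tgt : A → Q
  id : Q → A
  comp : A → A → A
  inv : A → A
  src_id : ∀ x, src (id x) = x
  tgt_id : ∀ x, tgt (id x) = x
  src_comp : ∀ g h, tgt g = src h → src (comp g h) = src g
  tgt_comp : ∀ g h, tgt g = src h → tgt (comp g h) = tgt h
  comp_assoc : ∀ g h k, tgt g = src h → tgt h = src k →
    comp (comp g h) k = comp g (comp h k)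
  id_comp : ∀ g, comp (id (src g)) g = g
  comp_id : ∀ g, comp g (id (tgt g)) = g
  src_inv : ∀ g, src (inv g) = tgt g
  tgt_inv : ∀ g, tgt (inv g) = src g
  inv_comp : ∀ g, comp (inv g) g = id (tgt g)
  comp_inv : ∀ g, comp g (inv g) = id (src g)

/-- The composite of the arrows attached by `φ` to the successive edges of a
walk `p` from `x` to `y` in the graph `Γ`; the trivial walk is sent to the
identity arrow `1_{f x}`. -/
def walkProd {V A Q : Type*} (G : DiscGroupoid A Q) {Γ : SimpleGraph V} (f : V → Q)
    (φ : V → V → A) : ∀ {x y : V}, Γ.Walk x y → A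
  | x, _, .nil => G.id (f x)
  | x, _, .cons (v := b) _h p => G.comp (φ x b) (walkProd G f φ p)

/-- A morphism from the pair groupoid on `V` to the groupoid `G` with object map
`f : V → Q`: a family of arrows `Φ x y : f x → f y` with `Φ x x = 1_{f x}` and
`Φ x y · Φ y z = Φ x z`. -/
def IsPairMorphism {V A Q : Type*} (G : DiscGroupoid A Q) (f : V → Q)
    (Φ : V → V → A) : Prop :=
  (∀ x y, G.src (Φ x y) = f x) ∧ (∀ x y, G.tgt (Φ x y) = f y) ∧
  (∀ x, Φ x x = G.id (f x)) ∧
  (∀ x y z, G.comp (Φ x y) (Φ y z) = Φ x z)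

theorem walkProd_st {V A Q : Type*} (G : DiscGroupoid A Q) {Γ : SimpleGraph V} (f : V → Q)
    (φ : V → V → A)
    (hsrc : ∀ x y, Γ.Adj x y → G.src (φ x y) = f x)
    (htgt : ∀ x y, Γ.Adj x y → G.tgt (φ x y) = f y) {x y : V} (p : Γ.Walk x y) :
    G.src (walkProd G f φ p) = f x ∧ G.tgt (walkProd G f φ p) = f y := by
  induction p with
  | nil => exact ⟨G.src_id _, G.tgt_id _⟩
  | cons h p ih =>
    have e := (htgt _ _ h).trans ih.1.symm
    exact ⟨(G.src_comp _ _ e).trans (hsrc _ _ h), (G.tgt_comp _ _ e).trans ih.2⟩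

theorem walkProd_append {V A Q : Type*} (G : DiscGroupoid A Q) {Γ : SimpleGraph V} (f : V → Q)
    (φ : V → V → A)
    (hsrc : ∀ x y, Γ.Adj x y → G.src (φ x y) = f x)
    (htgt : ∀ x y, Γ.Adj x y → G.tgt (φ x y) = f y) {x y z : V} (p : Γ.Walk x y)
    (q : Γ.Walk y z) :
    walkProd G f φ (p.append q) = G.comp (walkProd G f φ p) (walkProd G f φ q) := by
  have st := fun {x y : V} (p : Γ.Walk x y) => walkProd_st G f φ hsrc htgt p
  induction p with
  | nil =>
    have h := G.id_comp (walkProd G f φ q)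
    rw [(st q).1] at h
    exact h.symm
  | cons h p ih =>
    rw [SimpleGraph.Walk.cons_append]
    simp only [walkProd]
    rw [ih, G.comp_assoc _ _ _ ((htgt _ _ h).trans (st p).1.symm)
      ((st p).2.trans (st q).1.symm)]

/-- Unique extension of a discrete field to a groupoid morphism: if `Γ` is a
connected simple graph on `V`, `G` a groupoid over `Q`, `f : V → Q`, and `φ`
attaches to every adjacent pair `x ~ y` an arrow `φ x y : f x → f y` with
`φ y x = (φ x y)⁻¹` and trivial holonomy around every closed walk, then there is
a unique morphism `Φ` from the pair groupoid on `V` to `G` with object map `f`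
extending `φ`. -/
theorem discreteField_extends_uniquely {V A Q : Type*} (Γ : SimpleGraph V)
    (hconn : Γ.Connected) (G : DiscGroupoid A Q) (f : V → Q) (φ : V → V → A)
    (hsrc : ∀ x y, Γ.Adj x y → G.src (φ x y) = f x)
    (htgt : ∀ x y, Γ.Adj x y → G.tgt (φ x y) = f y)
    (hsymm : ∀ x y, Γ.Adj x y → φ y x = G.inv (φ x y))
    (hflat : ∀ (x : V) (p : Γ.Walk x x), walkProd G f φ p = G.id (f x)) :
    ∃! Φ : V → V → A, IsPairMorphism G f Φ ∧ ∀ x y, Γ.Adj x y → Φ x y = φ x y := by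
  have st := fun {x y : V} (p : Γ.Walk x y) => walkProd_st G f φ hsrc htgt p
  have app := fun {x y z : V} (p : Γ.Walk x y) (q : Γ.Walk y z) =>
    walkProd_append G f φ hsrc htgt p q
  have indep : ∀ {x y : V} (p q : Γ.Walk x y), walkProd G f φ p = walkProd G f φ q := by
    intro x y p q
    have h1 := hflat x (p.append q.reverse)
    have h2 := hflat y (q.reverse.append q)
    rw [app] at h1 h2
    have h3 := G.comp_assoc (walkProd G f φ p) (walkProd G f φ q.reverse) (walkProd G f φ q)
      ((st p).2.trans (st _).1.symm) ((st _).2.trans (st q).1.symm)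
    have h4 := G.id_comp (walkProd G f φ q)
    have h5 := G.comp_id (walkProd G f φ p)
    rw [(st q).1] at h4
    rw [(st p).2] at h5
    rw [h1, h2, h4, h5] at h3
    exact h3.symm
  let w : ∀ x y : V, Γ.Walk x y := fun x y => (hconn.preconnected x y).some
  refine ⟨fun x y => walkProd G f φ (w x y), ⟨⟨fun x y => (st _).1, fun x y => (st _).2,
    fun x => hflat x _, fun x y z => ?_⟩, fun x y h => ?_⟩, ?_⟩
  · exact (app _ _).symm.trans (indep _ _)
  · refine (indep _ (SimpleGraph.Walk.cons h .nil)).trans ?_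
    have h5 := G.comp_id (φ x y)
    rw [htgt _ _ h] at h5
    exact h5
  · rintro Ψ ⟨⟨-, -, hid, hcomp⟩, hext⟩
    have key : ∀ {x y : V} (p : Γ.Walk x y), Ψ x y = walkProd G f φ p := by
      intro x y p
      induction p with
      | nil => exact hid _
      | cons h p ih =>
        simp only [walkProd]
        rw [← ih, ← hext _ _ h, hcomp]
    funext x y
    exact key _
end

section
/- Let G be a groupoid over a set Q and let k ≥ 3. If Ψ: 𝔾^k → 𝔾^k satisfies the morphism properties, then there exists a unique morphism of groupoids Φ: G → G such that Ψ((g₁, …, g_k)) = (Φ(g₁), …, Φ(g_k)) for every k-gon (g₁, …, g_k) ∈ 𝔾^k. (This is the paper's proposition establishing a one-to-one correspondence between groupoid morphisms Φ: G → G and mappings Ψ: 𝔾^k → 𝔾^k satisfying the morphism properties.) -/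
/-- The cyclic successor of an index `i` in `Fin k`. -/
def nextIdx {k : ℕ} (i : Fin k) : Fin k := ⟨(i.val + 1) % k, Nat.mod_lt _ i.pos⟩

/-- `g = (g₁, …, g_k)` is a `k`-gon in the groupoid `G`: consecutive components
are composable cyclically (`tgt gᵢ = src gᵢ₊₁`, indices mod `k`) and the product
`g₁ · g₂ ⋯ g_k` equals the identity arrow `1_{src g₁}`. -/
def DiscGroupoid.IsGon {A Q : Type*} (G : DiscGroupoid A Q) {k : ℕ}
    (g : Fin k → A) : Prop :=
  (∀ i : Fin k, G.tgt (g i) = G.src (g (nextIdx i))) ∧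
  ∀ hpos : 0 < k,
    (List.ofFn g).foldl G.comp (G.id (G.src (g ⟨0, hpos⟩))) =
      G.id (G.src (g ⟨0, hpos⟩))

/-- The discrete jet space `𝔾^k`: the set of `k`-gons of the groupoid `G`. -/
def DiscGroupoid.Gon {A Q : Type*} (G : DiscGroupoid A Q) (k : ℕ) :=
  {g : Fin k → A // G.IsGon g}

/-- A morphism of groupoids (a functor): maps on objects and arrows preserving
sources, targets, identities and composition. -/
structure DiscMorphism {A Q A' Q' : Type*} (G : DiscGroupoid A Q)
    (G' : DiscGroupoid A' Q') where
  obj : Q → Q'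
  arr : A → A'
  src_arr : ∀ g, G'.src (arr g) = obj (G.src g)
  tgt_arr : ∀ g, G'.tgt (arr g) = obj (G.tgt g)
  arr_id : ∀ x, arr (G.id x) = G'.id (obj x)
  arr_comp : ∀ g h, G.tgt g = G.src h →
    arr (G.comp g h) = G'.comp (arr g) (arr h)

/-- The constant tuple of identity arrows at a point is a `k`-gon. -/
theorem DiscGroupoid.isGon_const_id {A Q : Type*} (G : DiscGroupoid A Q)
    {k : ℕ} (x : Q) : G.IsGon (fun _ : Fin k => G.id x) := by
  have hxx : G.comp (G.id x) (G.id x) = G.id x := by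
    have h := G.id_comp (G.id x)
    rwa [G.src_id] at h
  constructor
  · intro i
    rw [G.tgt_id, G.src_id]
  · intro hpos
    have key : ∀ l : List A, (∀ a ∈ l, a = G.id x) →
        l.foldl G.comp (G.id x) = G.id x := by
      intro l
      induction l with
      | nil => intro _; rfl
      | cons a t ih =>
        intro hmem
        have ha : a = G.id x := hmem a (by simp)
        rw [List.foldl_cons, ha, hxx]
        exact ih fun b hb => hmem b (by simp [hb])
    simp only [G.src_id]
    exact key _ (by
      intro a ha
      simp only [List.mem_ofFn] at ha
      obtain ⟨i, hi⟩ := ha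
      exact hi.symm)

/-- The map `α̂⁽ⁱ⁾ : 𝔾^k → 𝔾^k` sending a `k`-gon `[g]` to the constant `k`-gon
`(1_{α(gᵢ)}, …, 1_{α(gᵢ)})`. -/
def DiscGroupoid.alphaHat {A Q : Type*} (G : DiscGroupoid A Q) {k : ℕ}
    (i : Fin k) (g : G.Gon k) : G.Gon k :=
  ⟨fun _ => G.id (G.src (g.1 i)), G.isGon_const_id _⟩

/-- A map `Ψ : 𝔾^k → 𝔾^k` satisfies the morphism properties if
(I) `Ψ ∘ α̂⁽ⁱ⁾ = α̂⁽ⁱ⁾ ∘ Ψ` for every `i`, and (II) whenever two `k`-gons have an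
equal component, their images have the corresponding components equal. -/
def MorphismProps {A Q : Type*} (G : DiscGroupoid A Q) {k : ℕ}
    (Ψ : G.Gon k → G.Gon k) : Prop :=
  (∀ (i : Fin k) (g : G.Gon k), Ψ (G.alphaHat i g) = G.alphaHat i (Ψ g)) ∧
  (∀ (g h : G.Gon k) (l m : Fin k), g.1 l = h.1 m → (Ψ g).1 l = (Ψ h).1 m)

theorem DiscGroupoid.foldl_ids {A Q : Type*} (G : DiscGroupoid A Q) (q : Q) (l : List A)
    (hl : ∀ a ∈ l, a = G.id q) (x : A) (hx : G.tgt x = q) : l.foldl G.comp x = x := by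
  induction l with
  | nil => rfl
  | cons a t ih =>
    have ha : a = G.id q := hl a (by simp)
    rw [List.foldl_cons, ha, ← hx, G.comp_id]
    exact ih fun b hb => hl b (by simp [hb])

theorem DiscGroupoid.prod_tri {A Q : Type*} (G : DiscGroupoid A Q) {n : ℕ}
    (f : Fin (n + 3) → A) (h01 : G.tgt (f 0) = G.src (f 1)) (h12 : G.tgt (f 1) = G.src (f 2))
    (h20 : G.tgt (f 2) = G.src (f 0))
    (hr : ∀ i : Fin n, f i.succ.succ.succ = G.id (G.src (f 0))) :
    (List.ofFn f).foldl G.comp (G.id (G.src (f 0))) = G.comp (G.comp (f 0) (f 1)) (f 2) := by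
  rw [List.ofFn_succ, List.ofFn_succ, List.ofFn_succ, List.foldl_cons, List.foldl_cons,
    List.foldl_cons, G.id_comp]
  apply G.foldl_ids (G.src (f 0))
  · intro a ha
    rw [List.mem_ofFn] at ha
    obtain ⟨i, rfl⟩ := ha
    exact hr i
  · have e : G.tgt (G.comp (f 0) (f 1)) = G.src (f 2) := by rw [G.tgt_comp _ _ h01, h12]
    exact (G.tgt_comp _ _ e).trans h20

/-- The gon `(a, b, c, 1, …, 1)`. -/
def DiscGroupoid.triFun {A Q : Type*} (G : DiscGroupoid A Q) (n : ℕ) (a b c : A) :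
    Fin (n + 3) → A := fun i =>
  if i.val = 0 then a else if i.val = 1 then b else if i.val = 2 then c else G.id (G.src a)

theorem DiscGroupoid.triFun_isGon {A Q : Type*} (G : DiscGroupoid A Q) (n : ℕ) (a b c : A)
    (hab : G.tgt a = G.src b) (hbc : G.tgt b = G.src c) (hca : G.tgt c = G.src a)
    (h : G.comp (G.comp a b) c = G.id (G.src a)) : G.IsGon (G.triFun n a b c) := by
  constructor
  · intro i
    have hn : (nextIdx i).val = if i.val + 1 = n + 3 then 0 else i.val + 1 := by
      simp only [nextIdx]
      split_ifs with hh
      · rw [hh, Nat.mod_self]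
      · exact Nat.mod_eq_of_lt (by omega)
    simp only [DiscGroupoid.triFun, hn]
    split_ifs <;> first | omega | simp_all [G.tgt_id, G.src_id]
  · intro hpos
    exact (G.prod_tri (G.triFun n a b c) hab hbc hca (fun i => by
      simp [DiscGroupoid.triFun])).trans h

theorem DiscGroupoid.tri_exists {A Q : Type*} (G : DiscGroupoid A Q) (n : ℕ) (a b : A)
    (hab : G.tgt a = G.src b) :
    G.IsGon (G.triFun n a b (G.inv (G.comp a b))) := by
  apply G.triFun_isGon n _ _ _ hab
  · rw [G.src_inv, G.tgt_comp _ _ hab]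
  · rw [G.tgt_inv, G.src_comp _ _ hab]
  · rw [G.comp_inv, G.src_comp _ _ hab]

/-- For `k ≥ 3`, every map `Ψ : 𝔾^k → 𝔾^k` satisfying the morphism properties is
induced, componentwise and in a unique way, by a morphism of groupoids
`Φ : G → G`. -/
theorem morphismProps_iff_induced_by_groupoid_morphism {A Q : Type*}
    (G : DiscGroupoid A Q) (k : ℕ) (hk : 3 ≤ k)
    (Ψ : G.Gon k → G.Gon k) (hΨ : MorphismProps G Ψ) :
    ∃! Φ : DiscMorphism G G, ∀ g : G.Gon k, (Ψ g).1 = fun i => Φ.arr (g.1 i) := by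
  obtain ⟨n, rfl⟩ : ∃ n, k = n + 3 := ⟨k - 3, by omega⟩
  obtain ⟨h1, h2⟩ := hΨ
  let T : A → G.Gon (n + 3) := fun a => ⟨_, G.tri_exists n a (G.inv a) (G.src_inv a).symm⟩
  have hT0 : ∀ a, (T a).1 0 = a := fun a => rfl
  have hT1 : ∀ a, (T a).1 1 = G.inv a := fun a => rfl
  obtain ⟨φ, hφ⟩ : ∃ φ : A → A, φ = fun a => (Ψ (T a)).1 0 := ⟨_, rfl⟩
  have key : ∀ (g : G.Gon (n + 3)) i, (Ψ g).1 i = φ (g.1 i) := by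
    intro g i
    rw [hφ]
    exact h2 g (T (g.1 i)) i 0 (hT0 _).symm
  have hid : ∀ (g : G.Gon (n + 3)) i, φ (G.id (G.src (g.1 i))) = G.id (G.src (φ (g.1 i))) := by
    intro g i
    have e : (Ψ (G.alphaHat i g)).1 0 = (G.alphaHat i (Ψ g)).1 0 := by rw [h1 i g]
    rw [key] at e
    rw [← key g i]
    exact e
  have hsrc' : ∀ a, φ (G.id (G.src a)) = G.id (G.src (φ a)) := fun a => hid (T a) 0
  have hsrc : ∀ a, G.src (φ a) = G.src (φ (G.id (G.src a))) := fun a => by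
    rw [hsrc', G.src_id]
  have hidx : ∀ x, φ (G.id x) = G.id (G.src (φ (G.id x))) := fun x => by
    have := hsrc' (G.id x)
    rwa [G.src_id] at this
  have htgt : ∀ a, G.tgt (φ a) = G.src (φ (G.id (G.tgt a))) := fun a => by
    have e := (Ψ (T a)).2.1 0
    have e1 : nextIdx (0 : Fin (n + 3)) = 1 := by
      apply Fin.ext
      simp [nextIdx]
    rw [e1, key, key, hT0, hT1] at e
    rw [e, hsrc, G.src_inv]
  have hcmp : ∀ a b, G.tgt a = G.src b → G.tgt (φ a) = G.src (φ b) := fun a b h => by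
    rw [htgt, hsrc b, h]
  have hprod : ∀ a b, G.tgt a = G.src b →
      G.comp (G.comp (φ a) (φ b)) (φ (G.inv (G.comp a b))) = G.id (G.src (φ a)) := by
    intro a b hab
    let g : G.Gon (n + 3) := ⟨_, G.tri_exists n a b hab⟩
    have g0 : (Ψ g).1 0 = φ a := key g 0
    have g1 : (Ψ g).1 1 = φ b := key g 1
    have g2 : (Ψ g).1 2 = φ (G.inv (G.comp a b)) := key g 2
    have e := (Ψ g).2.2 (by omega)
    have p := G.prod_tri (Ψ g).1 (by rw [g0, g1]; exact hcmp _ _ hab)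
      (by rw [g1, g2]; apply hcmp; rw [G.src_inv, G.tgt_comp _ _ hab])
      (by rw [g2, g0]; apply hcmp; rw [G.tgt_inv, G.src_comp _ _ hab])
      (fun i => by
        rw [key, g0, ← hsrc']
        simp [g, DiscGroupoid.triFun])
    have e' := p.symm.trans e
    rw [g0, g1, g2] at e'
    refine e'.trans ?_
    rw [← g0]
    rfl
  -- cancellation
  have canc : ∀ u c, G.tgt u = G.src c → G.tgt c = G.src u →
      G.comp u c = G.id (G.src u) → u = G.inv c := by
    intro u c huc hcu h
    have e := G.comp_assoc u c (G.inv c) huc (G.src_inv c).symm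
    rw [h, G.comp_inv, ← huc, G.comp_id, ← hcu, ← G.src_inv c, G.id_comp] at e
    exact e.symm
  have hcomp : ∀ a b, G.tgt a = G.src b → φ (G.comp a b) = G.comp (φ a) (φ b) := by
    intro a b hab
    have hφab := hcmp a b hab
    have A1 : G.comp (φ a) (φ b) = G.inv (φ (G.inv (G.comp a b))) := by
      apply canc
      · rw [G.tgt_comp _ _ hφab]
        apply hcmp
        rw [G.src_inv, G.tgt_comp _ _ hab]
      · rw [G.src_comp _ _ hφab]
        apply hcmp
        rw [G.tgt_inv, G.src_comp _ _ hab]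
      · rw [hprod a b hab, G.src_comp _ _ hφab]
    have A2 : φ (G.comp a b) = G.inv (φ (G.inv (G.comp a b))) := by
      apply canc
      · apply hcmp
        rw [G.src_inv]
      · apply hcmp
        rw [G.tgt_inv]
      · have e := hprod (G.id (G.src (G.comp a b))) (G.comp a b) (G.tgt_id _)
        rw [G.id_comp, hsrc', G.id_comp, G.src_id] at e
        exact e
    rw [A1, A2]
  refine ⟨⟨fun x => G.src (φ (G.id x)), φ, hsrc, htgt, hidx, hcomp⟩,
    fun g => funext (key g), ?_⟩
  rintro ⟨o, r, s1, s2, s3, s4⟩ hΦ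
  have hr : r = φ := by
    funext a
    have e := congrFun (hΦ (T a)) 0
    rw [key, hT0] at e
    exact e.symm
  subst hr
  have ho : o = fun x => G.src (r (G.id x)) := by
    funext x
    rw [s1, G.src_id]
  subst ho
  rfl
end

section
/- Let G be a groupoid over a set Q, let k ≥ 3, and let Ψ: 𝔾^k → 𝔾^k be a map satisfying the morphism properties. Then for every k-gon [g] = (g₁, …, g_k) ∈ 𝔾^k one has Ψ([g]⁻¹) = (Ψ([g]))⁻¹, where the inverse of a k-gon is defined by (g₁, …, g_k)⁻¹ = (g_k⁻¹, g_{k−1}⁻¹, …, g₁⁻¹). (This is the paper's corollary to the correspondence between maps on 𝔾^k with the morphism properties and groupoid endomorphisms.) -/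
/-- The inverse of a `k`-tuple of arrows: `(g₁, …, g_k)⁻¹ = (g_k⁻¹, …, g₁⁻¹)`,
i.e. the `i`-th component of the inverse is `(g_{k+1-i})⁻¹`. -/
def DiscGroupoid.invTuple {A Q : Type*} (G : DiscGroupoid A Q) {k : ℕ}
    (g : Fin k → A) : Fin k → A :=
  fun i => G.inv (g i.rev)

theorem foldl_comp_ids {A Q : Type*} (G : DiscGroupoid A Q) (c : A) (l : List A)
    (h : ∀ a ∈ l, a = G.id (G.tgt c)) : l.foldl G.comp c = c := by
  induction l with
  | nil => rfl
  | cons a t ih =>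
    have ha := h a (by simp)
    rw [List.foldl_cons, ha, G.comp_id]
    exact ih fun b hb => h b (by simp [hb])

def pairTuple {A Q : Type*} (G : DiscGroupoid A Q) (n : ℕ) (a : A) : Fin (n + 2) → A :=
  fun i => if i.val = 0 then a else if i.val = 1 then G.inv a else G.id (G.src a)

theorem foldl_pair {A Q : Type*} (G : DiscGroupoid A Q) (n : ℕ) (f : Fin (n + 2) → A)
    (h01 : G.tgt (f 0) = G.src (f 1)) (ht : G.tgt (f 1) = G.src (f 0))
    (h : ∀ i : Fin n, f i.succ.succ = G.id (G.src (f 0))) :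
    (List.ofFn f).foldl G.comp (G.id (G.src (f 0))) = G.comp (f 0) (f 1) := by
  rw [List.ofFn_succ, List.ofFn_succ, List.foldl_cons, List.foldl_cons, G.id_comp]
  apply foldl_comp_ids
  intro a ha
  simp only [List.mem_ofFn] at ha
  obtain ⟨i, rfl⟩ := ha
  rw [h i]
  have := G.tgt_comp _ _ h01
  rw [ht] at this
  exact congrArg _ this.symm

theorem pairTuple_isGon {A Q : Type*} (G : DiscGroupoid A Q) (n : ℕ) (a : A) :
    G.IsGon (pairTuple G n a) := by
  constructor
  · intro i
    have h1 : G.tgt (pairTuple G n a i) = if i.val = 0 then G.tgt a else G.src a := by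
      unfold pairTuple
      split_ifs <;> simp [G.tgt_inv, G.tgt_id]
    have h2 : ∀ j, G.src (pairTuple G n a j) = if j.val = 1 then G.tgt a else G.src a := by
      intro j
      unfold pairTuple
      split_ifs <;> first | omega | simp [G.src_inv, G.src_id]
    rw [h1, h2]
    have : (nextIdx i).val = 1 ↔ i.val = 0 := by
      have hi := i.isLt
      unfold nextIdx
      simp only
      by_cases hlt : i.val + 1 < n + 2
      · rw [Nat.mod_eq_of_lt hlt]; omega
      · have : i.val + 1 = n + 2 := by omega
        rw [this, Nat.mod_self]; omega
    simp only [this]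
  · intro hpos
    have h0 : pairTuple G n a 0 = a := by simp [pairTuple]
    have h1 : pairTuple G n a 1 = G.inv a := by simp [pairTuple]
    have := foldl_pair G n (pairTuple G n a) (by rw [h0, h1, G.src_inv])
      (by rw [h0, h1, G.tgt_inv]) (by intro i; rw [h0]; simp [pairTuple])
    refine this.trans ?_
    change _ = G.id (G.src (pairTuple G n a 0))
    rw [h0, h1, G.comp_inv]

theorem eq_inv_of_comp {A Q : Type*} (G : DiscGroupoid A Q) (p q : A)
    (h : G.tgt p = G.src q) (hc : G.comp p q = G.id (G.src p)) : q = G.inv p := by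
  have h1 := G.comp_assoc (G.inv p) p q (G.tgt_inv p) h
  rw [G.inv_comp, hc, h, G.id_comp, ← G.tgt_inv p, G.comp_id] at h1
  exact h1

theorem map_pair {A Q : Type*} (G : DiscGroupoid A Q) (n : ℕ)
    (Ψ : G.Gon (n + 2) → G.Gon (n + 2)) (hΨ : MorphismProps G Ψ) (a : A) :
    (Ψ ⟨pairTuple G n a, pairTuple_isGon G n a⟩).1 1 =
      G.inv ((Ψ ⟨pairTuple G n a, pairTuple_isGon G n a⟩).1 0) := by
  set T : G.Gon (n + 2) := ⟨pairTuple G n a, pairTuple_isGon G n a⟩ with hT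
  have h0 : T.1 0 = a := by simp [hT, pairTuple]
  have h1 : T.1 1 = G.inv a := by simp [hT, pairTuple]
  have hid : ∀ i : Fin n, (Ψ T).1 i.succ.succ = G.id (G.src ((Ψ T).1 0)) := by
    intro i
    have e := hΨ.2 T (G.alphaHat 0 T) i.succ.succ 0 (by
      change _ = G.id (G.src (T.1 0))
      rw [h0]; simp [hT, pairTuple])
    rw [e, hΨ.1]
    rfl
  have hg := (Ψ T).2
  have h01 : G.tgt ((Ψ T).1 0) = G.src ((Ψ T).1 1) := by
    have := hg.1 0
    have e : nextIdx (0 : Fin (n + 2)) = 1 := by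
      ext; simp [nextIdx]
    rwa [e] at this
  have h10 : G.tgt ((Ψ T).1 1) = G.src ((Ψ T).1 0) := by
    have := hg.1 1
    rcases n with _ | n
    · exact this
    · have e : nextIdx (1 : Fin (n + 1 + 2)) = (0 : Fin (n + 1)).succ.succ := by
        ext; simp [nextIdx]
      rw [e, hid, G.src_id] at this
      exact this
  apply eq_inv_of_comp G _ _ h01
  exact (foldl_pair G n _ h01 h10 hid).symm.trans (hg.2 (by omega))

/-- A map `Ψ : 𝔾^k → 𝔾^k` (`k ≥ 3`) satisfying the morphism properties commutes
with inversion of `k`-gons: `Ψ ([g]⁻¹) = (Ψ [g])⁻¹`, where the inverse `k`-gon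
of `[g]` is represented by any `k`-gon whose underlying tuple is
`(g_k⁻¹, …, g₁⁻¹)`. -/
theorem morphismProps_map_inv {A Q : Type*} (G : DiscGroupoid A Q) (k : ℕ)
    (hk : 3 ≤ k) (Ψ : G.Gon k → G.Gon k) (hΨ : MorphismProps G Ψ)
    (g ginv : G.Gon k) (hginv : ginv.1 = G.invTuple g.1) :
    (Ψ ginv).1 = G.invTuple (Ψ g).1 := by
  obtain ⟨n, rfl⟩ : ∃ n, k = n + 2 := ⟨k - 2, by omega⟩
  funext i
  have h := map_pair G n Ψ hΨ (g.1 i.rev)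
  have e1 := hΨ.2 ginv ⟨_, pairTuple_isGon G n (g.1 i.rev)⟩ i 1 (by
    rw [hginv]; simp [pairTuple, DiscGroupoid.invTuple])
  have e0 := hΨ.2 g ⟨_, pairTuple_isGon G n (g.1 i.rev)⟩ i.rev 0 (by simp [pairTuple])
  rw [e1, h, ← e0]
  rfl
end

section
/- Let G be a group and k ≥ 3, and set 𝒢_k = {(g₁, …, g_k) ∈ G^k : g₁·g₂⋯g_k = 1}. Suppose Ψ: 𝒢_k → 𝒢_k satisfies Ψ(1, …, 1) = (1, …, 1) and the componentwise-dependence property: whenever (g₁, …, g_k), (h₁, …, h_k) ∈ 𝒢_k and g_l = h_m for some indices l, m, then the l-th component of Ψ(g₁, …, g_k) equals the m-th component of Ψ(h₁, …, h_k). Then there exists a unique group homomorphism f: G → G such that Ψ(g₁, …, g_k) = (f(g₁), …, f(g_k)) for all (g₁, …, g_k) ∈ 𝒢_k. -/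
/-- Let `G` be a group and `k ≥ 3`, and let `𝒢_k` be the set of `k`-tuples of
elements of `G` whose (ordered) product is `1`.  Any map `Ψ : 𝒢_k → 𝒢_k` fixing
the constant tuple `(1, …, 1)` and having the componentwise-dependence property
— whenever two tuples in `𝒢_k` have an equal component, their images have the
corresponding components equal — is induced componentwise by a unique group
homomorphism `f : G → G`. -/
theorem gonMap_induced_by_unique_group_hom {G : Type*} [Group G] (k : ℕ)
    (hk : 3 ≤ k)
    (Ψ : {g : Fin k → G // (List.ofFn g).prod = 1} →
         {g : Fin k → G // (List.ofFn g).prod = 1})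
    (hone : (Ψ ⟨fun _ => 1, by simp⟩).1 = fun _ => 1)
    (hdep : ∀ (g h : {g : Fin k → G // (List.ofFn g).prod = 1}) (l m : Fin k),
      g.1 l = h.1 m → (Ψ g).1 l = (Ψ h).1 m) :
    ∃! f : G →* G,
      ∀ g : {g : Fin k → G // (List.ofFn g).prod = 1},
        (Ψ g).1 = fun i => f (g.1 i) := by
  obtain ⟨n, rfl⟩ : ∃ n, k = n + 3 := ⟨k - 3, by omega⟩
  let t : G → G → Fin (n + 3) → G := fun a b =>
    Fin.cons a (Fin.cons b (Fin.cons (a * b)⁻¹ (fun _ => 1)))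
  have ht : ∀ a b, (List.ofFn (t a b)).prod = 1 := by
    intro a b
    simp [t, List.ofFn_succ]
  let f : G → G := fun a => (Ψ ⟨t a 1, ht a 1⟩).1 0
  have hf : ∀ (g : {g : Fin (n + 3) → G // (List.ofFn g).prod = 1}) (i : Fin (n + 3)),
      (Ψ g).1 i = f (g.1 i) := fun g i => hdep g ⟨t (g.1 i) 1, ht _ _⟩ i 0 rfl
  have f1 : f 1 = 1 := by
    have h := hf ⟨fun _ => 1, by simp⟩ 0
    rw [hone] at h
    exact h.symm
  have key : ∀ a b, f a * (f b * f (a * b)⁻¹) = 1 := by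
    intro a b
    have h := (Ψ ⟨t a b, ht a b⟩).2
    have e : (Ψ ⟨t a b, ht a b⟩).1 = fun i => f (t a b i) := funext fun i => hf _ i
    rw [e] at h
    simpa [t, List.ofFn_succ, f1] using h
  have finv : ∀ a, f a * f a⁻¹ = 1 := by
    intro a
    have h := key a 1
    simpa [f1] using h
  have fmul : ∀ a b, f (a * b) = f a * f b := by
    intro a b
    have h := key a b
    rw [← mul_assoc] at h
    rw [eq_inv_of_mul_eq_one_left h, eq_inv_of_mul_eq_one_left (finv (a * b))]
  refine ⟨⟨⟨f, f1⟩, fmul⟩, fun g => funext fun i => hf g i, ?_⟩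
  intro f' hf'
  ext a
  have h := congrFun (hf' ⟨t a 1, ht a 1⟩) 0
  exact h.symm
end

section
/- Let Q be a real normed vector space and let L: Q × Q × Q × Q → ℝ be continuously Fréchet differentiable. For a discrete field φ: ℤ × ℤ → Q the following are equivalent. (i) Stationarity of the action sum: for every finitely supported map δ: ℤ × ℤ → Q and every finite set F ⊆ ℤ × ℤ containing all (i,j) for which δ is nonzero at at least one of the four points (i,j), (i+1,j), (i+1,j+1), (i,j+1), the real function t ↦ Σ_{(i,j) ∈ F} L(φ(i,j) + t·δ(i,j), φ(i+1,j) + t·δ(i+1,j), φ(i+1,j+1) + t·δ(i+1,j+1), φ(i,j+1) + t·δ(i,j+1)) has derivative 0 at t = 0. (ii) The discrete Euler–Lagrange field equations: for every (i,j) ∈ ℤ × ℤ, the continuous linear functional D₁L(φ(i,j), φ(i+1,j), φ(i+1,j+1), φ(i,j+1)) + D₂L(φ(i−1,j), φ(i,j), φ(i,j+1), φ(i−1,j+1)) + D₃L(φ(i−1,j−1), φ(i,j−1), φ(i,j), φ(i−1,j)) + D₄L(φ(i,j−1), φ(i+1,j−1), φ(i+1,j), φ(i,j)) on Q is zero, where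 D_aL(q₁,q₂,q₃,q₄) denotes the partial Fréchet derivative of L with respect to its a-th argument at (q₁,q₂,q₃,q₄). -/
/-- corner values of a face -/
def faceVal {Q : Type*} (φ : ℤ × ℤ → Q) (p : ℤ × ℤ) : Q × Q × Q × Q :=
  (φ (p.1, p.2), φ (p.1 + 1, p.2), φ (p.1 + 1, p.2 + 1), φ (p.1, p.2 + 1))

lemma sum_shift_aux {Q : Type*} [NormedAddCommGroup Q] (G : ℤ × ℤ → Q → ℝ)
    (hG : ∀ p, G p 0 = 0) (δ : ℤ × ℤ → Q) (a : ℤ × ℤ) (F : Finset (ℤ × ℤ))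
    (hF : ∀ p, δ (p + a) ≠ 0 → p ∈ F) :
    ∑ p ∈ F, G p (δ (p + a)) = ∑ᶠ q, G (q - a) (δ q) := by
  rw [← finsum_comp_equiv (Equiv.addRight a), finsum_eq_sum_of_support_subset (s := F)]
  · simp
  · intro p hp
    apply hF
    intro h
    apply hp
    simp [h, hG]

lemma key_aux {Q : Type*} [NormedAddCommGroup Q]
    [NormedSpace ℝ Q] (L : Q × Q × Q × Q → ℝ) (hL : ContDiff ℝ 1 L)
    (φ δ : ℤ × ℤ → Q) (hδ : (Function.support δ).Finite) (F : Finset (ℤ × ℤ))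
    (hF : ∀ i j : ℤ,
          (δ (i, j) ≠ 0 ∨ δ (i + 1, j) ≠ 0 ∨ δ (i + 1, j + 1) ≠ 0 ∨
            δ (i, j + 1) ≠ 0) → (i, j) ∈ F) :
    HasDerivAt (fun t : ℝ => ∑ p ∈ F,
          L (φ (p.1, p.2) + t • δ (p.1, p.2),
             φ (p.1 + 1, p.2) + t • δ (p.1 + 1, p.2),
             φ (p.1 + 1, p.2 + 1) + t • δ (p.1 + 1, p.2 + 1),
             φ (p.1, p.2 + 1) + t • δ (p.1, p.2 + 1)))
      (∑ᶠ q : ℤ × ℤ, (fderiv ℝ L (faceVal φ (q - (0, 0))) (δ q, 0, 0, 0)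
        + fderiv ℝ L (faceVal φ (q - (1, 0))) (0, δ q, 0, 0)
        + fderiv ℝ L (faceVal φ (q - (1, 1))) (0, 0, δ q, 0)
        + fderiv ℝ L (faceVal φ (q - (0, 1))) (0, 0, 0, δ q))) 0 := by
  have h1 : HasDerivAt (fun t : ℝ => ∑ p ∈ F, L (faceVal φ p + t • faceVal δ p))
      (∑ p ∈ F, fderiv ℝ L (faceVal φ p) (faceVal δ p)) 0 := by
    apply HasDerivAt.fun_sum
    intro p _
    have hd : HasFDerivAt L (fderiv ℝ L (faceVal φ p))
        (faceVal φ p + (0 : ℝ) • faceVal δ p) := by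
      rw [zero_smul, add_zero]
      exact (hL.differentiable (by norm_num) _).hasFDerivAt
    have hl : HasDerivAt (fun t : ℝ => faceVal φ p + t • faceVal δ p) (faceVal δ p) 0 := by
      simpa using ((hasDerivAt_id (0 : ℝ)).smul_const (faceVal δ p)).const_add (faceVal φ p)
    exact hd.comp_hasDerivAt (0 : ℝ) hl
  convert h1 using 1
  · rfl
  have hs : ∀ G : ℤ × ℤ → Q → ℝ, (∀ p, G p 0 = 0) →
      (Function.support fun q => G q (δ q)).Finite := by
    intro G hG
    refine hδ.subset fun q hq h => hq ?_
    simp [h, hG]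
  rw [finsum_add_distrib, finsum_add_distrib, finsum_add_distrib,
    ← sum_shift_aux (fun p v => fderiv ℝ L (faceVal φ p) (v, 0, 0, 0)) _ δ (0, 0) F,
    ← sum_shift_aux (fun p v => fderiv ℝ L (faceVal φ p) (0, v, 0, 0)) _ δ (1, 0) F,
    ← sum_shift_aux (fun p v => fderiv ℝ L (faceVal φ p) (0, 0, v, 0)) _ δ (1, 1) F,
    ← sum_shift_aux (fun p v => fderiv ℝ L (faceVal φ p) (0, 0, 0, v)) _ δ (0, 1) F,
    ← Finset.sum_add_distrib, ← Finset.sum_add_distrib, ← Finset.sum_add_distrib]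
  · refine Finset.sum_congr rfl fun p _ => ?_
    rw [← map_add, ← map_add, ← map_add]
    congr 1
    simp [faceVal, Prod.add_def]
  · rintro ⟨i, j⟩ h
    apply hF
    simp at h
    tauto
  · intro p
    exact map_zero _
  · rintro ⟨i, j⟩ h
    apply hF
    simp at h
    tauto
  · intro p
    exact map_zero _
  · rintro ⟨i, j⟩ h
    apply hF
    simp at h
    tauto
  · intro p
    exact map_zero _
  · rintro ⟨i, j⟩ h
    apply hF
    simp at h
    tauto
  · intro p
    exact map_zero _
  · exact hs (fun q v => fderiv ℝ L (faceVal φ (q - (0, 0))) (v, 0, 0, 0)) fun p => map_zero _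
  · exact hs (fun q v => fderiv ℝ L (faceVal φ (q - (1, 0))) (0, v, 0, 0)) fun p => map_zero _
  · exact hs (fun q v => fderiv ℝ L (faceVal φ (q - (0, 0))) (v, 0, 0, 0)
      + fderiv ℝ L (faceVal φ (q - (1, 0))) (0, v, 0, 0))
      fun p => (congrArg₂ (· + ·) (map_zero _) (map_zero _)).trans (add_zero _)
  · exact hs (fun q v => fderiv ℝ L (faceVal φ (q - (1, 1))) (0, 0, v, 0)) fun p => map_zero _
  · exact hs (fun q v => fderiv ℝ L (faceVal φ (q - (0, 0))) (v, 0, 0, 0)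
      + fderiv ℝ L (faceVal φ (q - (1, 0))) (0, v, 0, 0)
      + fderiv ℝ L (faceVal φ (q - (1, 1))) (0, 0, v, 0))
      fun p => (congrArg₂ (· + ·) ((congrArg₂ (· + ·) (map_zero _) (map_zero _)).trans
        (add_zero _)) (map_zero _)).trans (add_zero _)
  · exact hs (fun q v => fderiv ℝ L (faceVal φ (q - (0, 1))) (0, 0, 0, v)) fun p => map_zero _

/-- Discrete Euler–Lagrange field equations for the pair groupoid over `Q` on
the square mesh `ℤ × ℤ` in `ℝ²`.  For a `C¹` discrete Lagrangian
`L : Q⁴ → ℝ` and a discrete field `φ : ℤ × ℤ → Q`, stationarity of the action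
sum under all finitely supported variations (the derivative at `t = 0` of the
action over any finite set of faces containing all faces touched by the
variation vanishes) is equivalent to the discrete Euler–Lagrange field
equations: at every vertex `(i, j)` the sum of the four partial Fréchet
derivatives of `L`, taken at the four faces containing `(i, j)` and in the slot
corresponding to `(i, j)`, vanishes as a functional on `Q`. -/
theorem discrete_action_stationary_iff_EL {Q : Type*} [NormedAddCommGroup Q]
    [NormedSpace ℝ Q] (L : Q × Q × Q × Q → ℝ) (hL : ContDiff ℝ 1 L)
    (φ : ℤ × ℤ → Q) :
    (∀ δ : ℤ × ℤ → Q, (Function.support δ).Finite →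
      ∀ F : Finset (ℤ × ℤ),
        (∀ i j : ℤ,
          (δ (i, j) ≠ 0 ∨ δ (i + 1, j) ≠ 0 ∨ δ (i + 1, j + 1) ≠ 0 ∨
            δ (i, j + 1) ≠ 0) → (i, j) ∈ F) →
        HasDerivAt (fun t : ℝ => ∑ p ∈ F,
          L (φ (p.1, p.2) + t • δ (p.1, p.2),
             φ (p.1 + 1, p.2) + t • δ (p.1 + 1, p.2),
             φ (p.1 + 1, p.2 + 1) + t • δ (p.1 + 1, p.2 + 1),
             φ (p.1, p.2 + 1) + t • δ (p.1, p.2 + 1))) 0 0)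
    ↔
    (∀ i j : ℤ, ∀ v : Q,
      fderiv ℝ L (φ (i, j), φ (i + 1, j), φ (i + 1, j + 1), φ (i, j + 1))
          (v, 0, 0, 0)
        + fderiv ℝ L (φ (i - 1, j), φ (i, j), φ (i, j + 1), φ (i - 1, j + 1))
          (0, v, 0, 0)
        + fderiv ℝ L (φ (i - 1, j - 1), φ (i, j - 1), φ (i, j), φ (i - 1, j))
          (0, 0, v, 0)
        + fderiv ℝ L (φ (i, j - 1), φ (i + 1, j - 1), φ (i + 1, j), φ (i, j))
          (0, 0, 0, v) = 0) := by
  constructor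
  · intro H i j v
    have hδ : (Function.support (Pi.single (i, j) v : ℤ × ℤ → Q)).Finite :=
      (Set.finite_singleton (i, j)).subset Pi.support_single_subset
    have hF : ∀ k l : ℤ,
          ((Pi.single (i, j) v : ℤ × ℤ → Q) (k, l) ≠ 0 ∨
            (Pi.single (i, j) v : ℤ × ℤ → Q) (k + 1, l) ≠ 0 ∨
            (Pi.single (i, j) v : ℤ × ℤ → Q) (k + 1, l + 1) ≠ 0 ∨
            (Pi.single (i, j) v : ℤ × ℤ → Q) (k, l + 1) ≠ 0) →
          (k, l) ∈ ({(i, j), (i - 1, j), (i - 1, j - 1), (i, j - 1)} : Finset (ℤ × ℤ)) := by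
      intro k l h
      have hm : ∀ a b : ℤ, (Pi.single (i, j) v : ℤ × ℤ → Q) (a, b) ≠ 0 → a = i ∧ b = j := by
        intro a b hab
        have := Pi.support_single_subset (show (a, b) ∈ Function.support _ from hab)
        simpa using this
      simp only [Finset.mem_insert, Finset.mem_singleton, Prod.mk.injEq]
      rcases h with h | h | h | h <;> have := hm _ _ h <;> omega
    have h := (key_aux L hL φ _ hδ _ hF).unique (H _ hδ _ hF)
    rw [finsum_eq_single _ (i, j)] at h
    · simpa [faceVal] using h
    · intro q hq
      rw [Pi.single_eq_of_ne hq]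
      simp only [← Prod.zero_eq_mk, map_zero, add_zero]
  · intro H δ hδ F hF
    convert key_aux L hL φ δ hδ F hF using 1
    symm
    refine finsum_eq_zero_of_forall_eq_zero ?_
    rintro ⟨i, j⟩
    simpa [faceVal] using H i j (δ (i, j))
end
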